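/- Let C = FE + (qK + q^{−1}K^{−1})/(q − q^{−1})² ∈ Ū_q (the Casimir element), and set c_s = (q^s + q^{−s})/(q − q^{−1})². Then for all x ∈ Ū_q, all α ∈ {±1} and all 1 ≤ s ≤ p−1: χ^α_s(C x) = α c_s χ^α_s(x) and G_s(C x) = c_s G_s(x) + (χ^+_s + χ^−_{p−s})(x). Consequently, G_s(C^n) = n p c_s^{n−1} for every integer n ≥ 1. -/

import Mathlib

noncomputable section

open scoped TensorProduct

namespace Uqsl2

/-- Generators of the restricted quantum group. -/
inductive gen : Type | E | F | K | Kinv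

/-- The primitive `2p`-th root of unity `q = e^{iπ/p}`. -/
def q (p : ℕ) : ℂ := Complex.exp (Real.pi * Complex.I / p)

/-- The `q`-integer `[n] = (q^n - q^{-n})/(q - q^{-1})`. -/
def qi (p : ℕ) (n : ℤ) : ℂ := (q p ^ n - q p ^ (-n)) / (q p - (q p)⁻¹)

/-- The `q`-factorial `[m]!`. -/
def qfact (p m : ℕ) : ℂ := ∏ i ∈ Finset.range m, qi p (i + 1)

open FreeAlgebra in
/-- The defining relations of `Ū_q(sl₂)`. -/
inductive rel (p : ℕ) : FreeAlgebra ℂ gen → FreeAlgebra ℂ gen → Prop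
  | KKinv : rel p (ι ℂ gen.K * ι ℂ gen.Kinv) 1
  | KinvK : rel p (ι ℂ gen.Kinv * ι ℂ gen.K) 1
  | Ep : rel p (ι ℂ gen.E ^ p) 0
  | Fp : rel p (ι ℂ gen.F ^ p) 0
  | K2p : rel p (ι ℂ gen.K ^ (2 * p)) 1
  | KE : rel p (ι ℂ gen.K * ι ℂ gen.E) (q p ^ 2 • (ι ℂ gen.E * ι ℂ gen.K))
  | KF : rel p (ι ℂ gen.K * ι ℂ gen.F) ((q p ^ 2)⁻¹ • (ι ℂ gen.F * ι ℂ gen.K))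
  | EF : rel p (ι ℂ gen.E * ι ℂ gen.F - ι ℂ gen.F * ι ℂ gen.E)
             ((q p - (q p)⁻¹)⁻¹ • (ι ℂ gen.K - ι ℂ gen.Kinv))

/-- The restricted quantum group `Ū_q(sl₂)`, presented by generators and relations. -/
abbrev Uq (p : ℕ) := RingQuot (rel p)

def EE (p : ℕ) : Uq p := RingQuot.mkAlgHom ℂ (rel p) (FreeAlgebra.ι ℂ gen.E)
def FF (p : ℕ) : Uq p := RingQuot.mkAlgHom ℂ (rel p) (FreeAlgebra.ι ℂ gen.F)
def KK (p : ℕ) : Uq p := RingQuot.mkAlgHom ℂ (rel p) (FreeAlgebra.ι ℂ gen.K)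
def KKinv (p : ℕ) : Uq p := RingQuot.mkAlgHom ℂ (rel p) (FreeAlgebra.ι ℂ gen.Kinv)

/-! ### The simple modules `X^α(s)` as matrix representations -/

/-- Matrix of `K` on `X^α(s)` in the canonical basis. -/
def XK (p : ℕ) (α : ℂ) (s : ℕ) : Matrix (Fin s) (Fin s) ℂ :=
  Matrix.diagonal fun i => α * q p ^ ((s : ℤ) - 1 - 2 * (i : ℕ))

/-- Matrix of `E` on `X^α(s)` in the canonical basis. -/
def XE (p : ℕ) (α : ℂ) (s : ℕ) : Matrix (Fin s) (Fin s) ℂ :=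
  Matrix.of fun i j =>
    if (i : ℕ) + 1 = (j : ℕ) then α * qi p (j : ℕ) * qi p ((s : ℤ) - (j : ℕ)) else 0

/-- Matrix of `F` on `X^α(s)` in the canonical basis. -/
def XF (s : ℕ) : Matrix (Fin s) (Fin s) ℂ :=
  Matrix.of fun i j => if (i : ℕ) = (j : ℕ) + 1 then (1 : ℂ) else 0

/-- The statement that `ρX α s` is the representation on `X^α(s)` for the relevant
values of `α` and `s`. -/
def IsXRep (p : ℕ) (ρX : (α : ℂ) → (s : ℕ) → (Uq p →ₐ[ℂ] Matrix (Fin s) (Fin s) ℂ)) : Prop :=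
  ∀ α : ℂ, (α = 1 ∨ α = -1) → ∀ s : ℕ, 1 ≤ s → s ≤ p →
    ρX α s (KK p) = XK p α s ∧ ρX α s (EE p) = XE p α s ∧ ρX α s (FF p) = XF s

/-! ### The projective modules `P^α(s)` as matrix representations -/

/-- Index for the standard basis `(b_i, x_j, y_k, a_l)` of `P^α(s)`. -/
abbrev PIdx (p s : ℕ) := Fin s ⊕ (Fin (p - s) ⊕ (Fin (p - s) ⊕ Fin s))

/-- Diagonal of the matrix of `K` on `P^α(s)`. -/
def PKdiag (p : ℕ) (α : ℂ) (s : ℕ) : PIdx p s → ℂ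
  | .inl i => α * q p ^ ((s : ℤ) - 1 - 2 * (i : ℕ))
  | .inr (.inl j) => -α * q p ^ ((p : ℤ) - s - 1 - 2 * (j : ℕ))
  | .inr (.inr (.inl k)) => -α * q p ^ ((p : ℤ) - s - 1 - 2 * (k : ℕ))
  | .inr (.inr (.inr l)) => α * q p ^ ((s : ℤ) - 1 - 2 * (l : ℕ))

/-- Matrix of `K` on `P^α(s)` in the standard basis. -/
def PK (p : ℕ) (α : ℂ) (s : ℕ) : Matrix (PIdx p s) (PIdx p s) ℂ :=
  Matrix.diagonal (PKdiag p α s)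

/-- Matrix of `E` on `P^α(s)` in the standard basis. -/
def PE (p : ℕ) (α : ℂ) (s : ℕ) : Matrix (PIdx p s) (PIdx p s) ℂ :=
  Matrix.of fun i j =>
    match i, j with
    | .inl i, .inl j =>
        if (i : ℕ) + 1 = (j : ℕ) then α * qi p (j : ℕ) * qi p ((s : ℤ) - (j : ℕ)) else 0
    | .inr (.inl jx), .inl j => if (j : ℕ) = 0 ∧ (jx : ℕ) + 1 = p - s then 1 else 0
    | .inr (.inr (.inr l)), .inl j => if (l : ℕ) + 1 = (j : ℕ) then 1 else 0
    | .inr (.inl i), .inr (.inl j) =>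
        if (i : ℕ) + 1 = (j : ℕ) then -α * qi p (j : ℕ) * qi p ((p : ℤ) - s - (j : ℕ)) else 0
    | .inr (.inr (.inl i)), .inr (.inr (.inl k)) =>
        if (i : ℕ) + 1 = (k : ℕ) then -α * qi p (k : ℕ) * qi p ((p : ℤ) - s - (k : ℕ)) else 0
    | .inr (.inr (.inr l)), .inr (.inr (.inl k)) =>
        if (k : ℕ) = 0 ∧ (l : ℕ) + 1 = s then 1 else 0
    | .inr (.inr (.inr i)), .inr (.inr (.inr l)) =>
        if (i : ℕ) + 1 = (l : ℕ) then α * qi p (l : ℕ) * qi p ((s : ℤ) - (l : ℕ)) else 0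
    | _, _ => 0

/-- Matrix of `F` on `P^α(s)` in the standard basis. -/
def PF (p s : ℕ) : Matrix (PIdx p s) (PIdx p s) ℂ :=
  Matrix.of fun i j =>
    match i, j with
    | .inl i, .inl j => if (i : ℕ) = (j : ℕ) + 1 then (1 : ℂ) else 0
    | .inr (.inr (.inl k)), .inl j => if (j : ℕ) + 1 = s ∧ (k : ℕ) = 0 then 1 else 0
    | .inr (.inl i), .inr (.inl j) => if (i : ℕ) = (j : ℕ) + 1 then 1 else 0
    | .inr (.inr (.inr l)), .inr (.inl j) => if (j : ℕ) + 1 = p - s ∧ (l : ℕ) = 0 then 1 else 0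
    | .inr (.inr (.inl i)), .inr (.inr (.inl k)) => if (i : ℕ) = (k : ℕ) + 1 then 1 else 0
    | .inr (.inr (.inr i)), .inr (.inr (.inr l)) => if (i : ℕ) = (l : ℕ) + 1 then 1 else 0
    | _, _ => 0

/-- The statement that `ρP α s` is the representation on `P^α(s)` for the relevant
values of `α` and `s`. -/
def IsPRep (p : ℕ)
    (ρP : (α : ℂ) → (s : ℕ) → (Uq p →ₐ[ℂ] Matrix (PIdx p s) (PIdx p s) ℂ)) : Prop :=
  ∀ α : ℂ, (α = 1 ∨ α = -1) → ∀ s : ℕ, 1 ≤ s → s ≤ p - 1 →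
    ρP α s (KK p) = PK p α s ∧ ρP α s (EE p) = PE p α s ∧ ρP α s (FF p) = PF p s

/-! ### Symmetric linear forms, characters, and the forms `G_s` -/

/-- Symmetric linear forms. -/
def IsSLF (p : ℕ) (φ : Uq p →ₗ[ℂ] ℂ) : Prop := ∀ x y : Uq p, φ (x * y) = φ (y * x)

/-- The character of a matrix representation. -/
def chiOf (p : ℕ) {n : Type} [Fintype n] [DecidableEq n]
    (ρ : Uq p →ₐ[ℂ] Matrix n n ℂ) : Uq p →ₗ[ℂ] ℂ :=
  (Matrix.traceLinearMap n ℂ ℂ).comp ρ.toLinearMap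

/-- The matrix entry functional. -/
def entry {n : Type} (i j : n) : Matrix n n ℂ →ₗ[ℂ] ℂ where
  toFun M := M i j
  map_add' _ _ := rfl
  map_smul' _ _ := rfl

/-- The symmetric linear form `G_s = tr H^+_s + tr H^-_{p-s}`. -/
def GOf (p : ℕ)
    (ρP : (α : ℂ) → (s : ℕ) → (Uq p →ₐ[ℂ] Matrix (PIdx p s) (PIdx p s) ℂ))
    (s : ℕ) : Uq p →ₗ[ℂ] ℂ :=
  (∑ i : Fin s,
    (entry (Sum.inr (Sum.inr (Sum.inr i))) (Sum.inl i)).comp (ρP 1 s).toLinearMap) +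
  (∑ j : Fin (p - s),
    (entry (Sum.inr (Sum.inr (Sum.inr j))) (Sum.inl j)).comp (ρP (-1) (p - s)).toLinearMap)

/-! ### Convolution product -/

/-- The convolution product of two linear forms, with respect to a comultiplication `Δ`. -/
def conv (p : ℕ) (Δ : Uq p →ₐ[ℂ] (Uq p ⊗[ℂ] Uq p)) (φ ψ : Uq p →ₗ[ℂ] ℂ) :
    Uq p →ₗ[ℂ] ℂ :=
  (LinearMap.mul' ℂ ℂ).comp ((TensorProduct.map φ ψ).comp Δ.toLinearMap)

/-- The statement that `Δ` is the comultiplication of `Ū_q(sl₂)`. -/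
def IsCoprod (p : ℕ) (Δ : Uq p →ₐ[ℂ] (Uq p ⊗[ℂ] Uq p)) : Prop :=
  Δ (EE p) = 1 ⊗ₜ[ℂ] EE p + EE p ⊗ₜ[ℂ] KK p ∧
  Δ (FF p) = FF p ⊗ₜ[ℂ] 1 + KKinv p ⊗ₜ[ℂ] FF p ∧
  Δ (KK p) = KK p ⊗ₜ[ℂ] KK p ∧
  Δ (KKinv p) = KKinv p ⊗ₜ[ℂ] KKinv p


/-- The Casimir element `C = FE + (qK + q⁻¹K⁻¹)/(q - q⁻¹)²`. -/
def Casimir (p : ℕ) : Uq p :=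
  FF p * EE p + ((q p - (q p)⁻¹) ^ 2)⁻¹ • (q p • KK p + (q p)⁻¹ • KKinv p)

/-- `c_s = (q^s + q^{-s})/(q - q^{-1})²`. -/
def cas (p s : ℕ) : ℂ := (q p ^ (s : ℤ) + q p ^ (-(s : ℤ))) / (q p - (q p)⁻¹) ^ 2

/-!
On `X^α(s)` the Casimir element acts by the scalar `α c_s`, and on `P^α(s)` by `α c_s` plus the
nilpotent map `b_i ↦ a_i`. The matrix `H^α_s(u)` reads off the `a`-coordinates of `u • b_i`, and
modulo the submodule spanned by the `x_j`, `y_k`, `a_l` the vectors `b_i` span `X^α(s)`; hence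
`tr H^α_s(Cu) = α c_s tr H^α_s(u) + χ^α_s(u)`. As `q^p = -1`, the two values `c_s` and `-c_{p-s}`
agree, so the pair `(G_s, χ^+_s + χ^-_{p-s})` behaves under `C` like a Jordan block of
eigenvalue `c_s`, whose powers produce the factor `n c_s^{n-1}`.
-/

section General

theorem apply_pow_mul_of_jordan {M R : Type*} [Monoid M] [CommSemiring R] {G χ : M → R} {z : M}
    {c : R} (hχ : ∀ x, χ (z * x) = c * χ x) (hG : ∀ x, G (z * x) = c * G x + χ x) (n : ℕ) :
    G (z ^ (n + 1)) = c ^ (n + 1) * G 1 + (n + 1) * c ^ n * χ 1 := by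
  have hχ_pow (n : ℕ) : χ (z ^ n) = c ^ n * χ 1 := by
    induction n with
    | zero => simp
    | succ n ih => rw [pow_succ', hχ, ih, pow_succ', mul_assoc]
  induction n with
  | zero => simpa using hG 1
  | succ n ih =>
    rw [pow_succ', hG, ih, hχ_pow]
    push_cast
    ring

open Matrix in
theorem toBlocks₁₁_map_of_adjoin_eq_top {R A m n : Type*} [CommSemiring R] [Semiring A]
    [Algebra R A] [Fintype m] [DecidableEq m] [Fintype n] [DecidableEq n] {S : Set A}
    (hS : Algebra.adjoin R S = ⊤) {ρ : A →ₐ[R] Matrix (m ⊕ n) (m ⊕ n) R}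
    {σ : A →ₐ[R] Matrix m m R}
    (h : ∀ g ∈ S, (ρ g).toBlocks₁₁ = σ g ∧ (ρ g).toBlocks₁₂ = 0) (x : A) :
    (ρ x).toBlocks₁₁ = σ x := by
  have toBlocks₁₁_mul (M N : Matrix (m ⊕ n) (m ⊕ n) R) :
      (M * N).toBlocks₁₁ = M.toBlocks₁₁ * N.toBlocks₁₁ + M.toBlocks₁₂ * N.toBlocks₂₁ := by
    ext i j
    exact Fintype.sum_sum_type _
  have toBlocks₁₂_mul (M N : Matrix (m ⊕ n) (m ⊕ n) R) :
      (M * N).toBlocks₁₂ = M.toBlocks₁₁ * N.toBlocks₁₂ + M.toBlocks₁₂ * N.toBlocks₂₂ := by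
    ext i j
    exact Fintype.sum_sum_type _
  suffices hx : (ρ x).toBlocks₁₁ = σ x ∧ (ρ x).toBlocks₁₂ = 0 from hx.1
  induction (hS ▸ Algebra.mem_top : x ∈ Algebra.adjoin R S) using Algebra.adjoin_induction with
  | mem g hg => exact h g hg
  | algebraMap r =>
    rw [AlgHom.commutes, AlgHom.commutes, algebraMap_eq_diagonal, algebraMap_eq_diagonal]
    exact ⟨toBlocks₁₁_diagonal _, toBlocks₁₂_diagonal _⟩
  | add x y _ _ hx hy =>
    rw [map_add, map_add, ← hx.1, ← hy.1]
    exact ⟨rfl, (congrArg₂ (· + ·) hx.2 hy.2).trans (add_zero _)⟩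
  | mul x y _ _ hx hy =>
    rw [map_mul, map_mul, toBlocks₁₁_mul, toBlocks₁₂_mul, hx.1, hx.2, hy.1, hy.2]
    simp

end General

section Scalars

variable {p : ℕ}

theorem q_ne_zero (p : ℕ) : q p ≠ 0 := Complex.exp_ne_zero _

theorem q_pow_self (hp : p ≠ 0) : q p ^ p = -1 := by
  rw [q, ← Complex.exp_nat_mul, mul_div_cancel₀ _ (Nat.cast_ne_zero.mpr hp),
    Complex.exp_pi_mul_I]

theorem cas_sub (hp : p ≠ 0) {s : ℕ} (hs : s ≤ p) : cas p (p - s) = -cas p s := by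
  rw [cas, cas, Nat.cast_sub hs, neg_sub, zpow_sub₀ (q_ne_zero p), zpow_sub₀ (q_ne_zero p),
    zpow_natCast _ p, q_pow_self hp, zpow_neg]
  ring

theorem qi_zero (p : ℕ) : qi p 0 = 0 := by simp [qi]

/-- The eigenvalue of the summand `(qK + q⁻¹K⁻¹)/(q - q⁻¹)²` of the Casimir element on a vector
of `K`-weight `μ`. -/
def cartanEigenvalue (p : ℕ) (μ : ℂ) : ℂ :=
  ((q p - (q p)⁻¹) ^ 2)⁻¹ * (q p * μ + (q p)⁻¹ * μ⁻¹)

theorem qi_mul_qi_add_cartanEigenvalue {α : ℂ} (hα : α = 1 ∨ α = -1) (s : ℕ) (i : ℤ) :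
    α * qi p i * qi p (s - i) + cartanEigenvalue p (α * q p ^ ((s : ℤ) - 1 - 2 * i)) =
      α * cas p s := by
  have hq := q_ne_zero p
  have hα_inv : α⁻¹ = α := by rcases hα with rfl | rfl <;> norm_num
  have hqi : (q p ^ i - q p ^ (-i)) * (q p ^ (s - i) - q p ^ (-(s - i))) +
      (q p * q p ^ ((s : ℤ) - 1 - 2 * i) + (q p)⁻¹ * (q p ^ ((s : ℤ) - 1 - 2 * i))⁻¹) =
      q p ^ (s : ℤ) + q p ^ (-(s : ℤ)) := by
    rw [show (s : ℤ) - 1 - 2 * i = s - i - i - 1 by ring]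
    simp only [zpow_neg, zpow_sub₀ hq, zpow_one]
    field_simp
    ring
  rw [cartanEigenvalue, cas, ← hqi, mul_inv, hα_inv, qi, qi]
  generalize q p - (q p)⁻¹ = d
  ring

end Scalars

section Algebra

variable {p : ℕ}

theorem KK_mul_KKinv (p : ℕ) : KK p * KKinv p = 1 := by
  simpa [KK, KKinv] using RingQuot.mkAlgHom_rel ℂ (rel.KKinv (p := p))

theorem KKinv_mul_KK (p : ℕ) : KKinv p * KK p = 1 := by
  simpa [KK, KKinv] using RingQuot.mkAlgHom_rel ℂ (rel.KinvK (p := p))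

theorem KKinv_eq_pow (hp : p ≠ 0) : KKinv p = KK p ^ (2 * p - 1) := by
  have hK : KK p ^ (2 * p) = 1 := by
    simpa [KK] using RingQuot.mkAlgHom_rel ℂ (rel.K2p (p := p))
  refine left_inv_eq_right_inv (KKinv_mul_KK p) ?_
  rw [mul_pow_sub_one (by lia), hK]

theorem adjoin_EE_FF_KK_eq_top (hp : p ≠ 0) : Algebra.adjoin ℂ {EE p, FF p, KK p} = ⊤ := by
  have hgen : Algebra.adjoin ℂ
      (RingQuot.mkAlgHom ℂ (rel p) '' Set.range (FreeAlgebra.ι ℂ)) = ⊤ := by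
    rw [← AlgHom.map_adjoin, FreeAlgebra.adjoin_range_ι, Algebra.map_top, AlgHom.range_eq_top]
    exact RingQuot.mkAlgHom_surjective ℂ (rel p)
  rw [eq_top_iff, ← hgen, Algebra.adjoin_le_iff]
  rintro _ ⟨_, ⟨g, rfl⟩, rfl⟩
  cases g with
  | E => exact Algebra.subset_adjoin (by simp [EE])
  | F => exact Algebra.subset_adjoin (by simp [FF])
  | K => exact Algebra.subset_adjoin (by simp [KK])
  | Kinv =>
    change KKinv p ∈ _
    rw [KKinv_eq_pow hp]
    exact pow_mem (Algebra.subset_adjoin (by simp)) _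

variable {n : Type*} [Fintype n] [DecidableEq n]

theorem map_KKinv_of_diagonal {ρ : Uq p →ₐ[ℂ] Matrix n n ℂ} {d : n → ℂ}
    (hK : ρ (KK p) = Matrix.diagonal d) : ρ (KKinv p) = Matrix.diagonal d⁻¹ := by
  have hinv : Matrix.diagonal d * ρ (KKinv p) = 1 := by
    rw [← hK, ← map_mul, KK_mul_KKinv, map_one]
  have hentry (i j : n) : d i * ρ (KKinv p) i j = (1 : Matrix n n ℂ) i j := by
    rw [← Matrix.diagonal_mul, hinv]
  ext i j
  have hd : d i ≠ 0 := left_ne_zero_of_mul_eq_one ((hentry i i).trans (Matrix.one_apply_eq i))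
  rw [(eq_inv_mul_iff_mul_eq₀ hd).mpr (hentry i j), Matrix.one_apply, Matrix.diagonal_apply]
  simp

theorem map_Casimir_of_diagonal {ρ : Uq p →ₐ[ℂ] Matrix n n ℂ} {d : n → ℂ}
    (hK : ρ (KK p) = Matrix.diagonal d) :
    ρ (Casimir p) =
      ρ (FF p) * ρ (EE p) + Matrix.diagonal fun i => cartanEigenvalue p (d i) := by
  rw [Casimir, map_add, map_mul, map_smul, map_add, map_smul, map_smul, hK,
    map_KKinv_of_diagonal hK, ← Matrix.diagonal_smul, ← Matrix.diagonal_smul,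
    Matrix.diagonal_add, ← Matrix.diagonal_smul]
  rfl

end Algebra

section Simple

variable {p s : ℕ} {α : ℂ} {σ : Uq p →ₐ[ℂ] Matrix (Fin s) (Fin s) ℂ}

/-- `σ` is the matrix representation afforded by `X^α(s)` in its canonical basis; the action of
`KKinv` is then forced, being inverse to that of `KK`. -/
def ActsAsX (p : ℕ) (α : ℂ) (s : ℕ) (σ : Uq p →ₐ[ℂ] Matrix (Fin s) (Fin s) ℂ) : Prop :=
  σ (KK p) = XK p α s ∧ σ (EE p) = XE p α s ∧ σ (FF p) = XF s

theorem XF_zero (h : 0 < s) : XF s ⟨0, h⟩ = 0 := by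
  ext j
  simp [XF]

theorem XF_succ {k : ℕ} (h : k + 1 < s) : XF s ⟨k + 1, h⟩ = Pi.single ⟨k, by lia⟩ 1 := by
  ext j
  simp [XF, Pi.single_apply, Fin.ext_iff, eq_comm]

theorem XF_mul_XE (p : ℕ) (α : ℂ) (s : ℕ) :
    XF s * XE p α s = Matrix.diagonal fun i : Fin s => α * qi p (i : ℕ) * qi p (s - (i : ℕ)) := by
  ext ⟨i, hi⟩ j
  rw [Matrix.mul_apply_eq_vecMul]
  cases i with
  | zero => simp [XF_zero, Matrix.diagonal_apply, qi_zero]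
  | succ k =>
    rw [XF_succ, Matrix.single_one_vecMul]
    by_cases hj : k + 1 = j <;> simp [XE, Fin.ext_iff, hj]

theorem ActsAsX.map_Casimir (hσ : ActsAsX p α s σ) (hα : α = 1 ∨ α = -1) :
    σ (Casimir p) = (α * cas p s) • 1 := by
  obtain ⟨hK, hE, hF⟩ := hσ
  rw [map_Casimir_of_diagonal hK, hE, hF, XF_mul_XE, Matrix.diagonal_add,
    Matrix.smul_one_eq_diagonal]
  simp only [qi_mul_qi_add_cartanEigenvalue hα]

theorem ActsAsX.chiOf_Casimir_mul (hσ : ActsAsX p α s σ) (hα : α = 1 ∨ α = -1) (x : Uq p) :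
    chiOf p σ (Casimir p * x) = α * cas p s * chiOf p σ x := by
  change (σ (Casimir p * x)).trace = _ * (σ x).trace
  rw [map_mul, hσ.map_Casimir hα, smul_one_mul, Matrix.trace_smul, smul_eq_mul]

end Simple

section Projective

variable {p s : ℕ} {α : ℂ} {σ : Uq p →ₐ[ℂ] Matrix (Fin s) (Fin s) ℂ}
  {ρ : Uq p →ₐ[ℂ] Matrix (PIdx p s) (PIdx p s) ℂ}

/-- The index of the basis vector `b_i` of `P^α(s)`. -/
abbrev bIdx (i : Fin s) : PIdx p s := .inl i

/-- The index of the basis vector `x_j` of `P^α(s)`. -/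
abbrev xIdx (j : Fin (p - s)) : PIdx p s := .inr (.inl j)

/-- The index of the basis vector `a_l` of `P^α(s)`. -/
abbrev aIdx (l : Fin s) : PIdx p s := .inr (.inr (.inr l))

/-- `ρ` is the matrix representation afforded by `P^α(s)` in its standard basis; the action of
`KKinv` is then forced, being inverse to that of `KK`. -/
def ActsAsP (p : ℕ) (α : ℂ) (s : ℕ) (ρ : Uq p →ₐ[ℂ] Matrix (PIdx p s) (PIdx p s) ℂ) : Prop :=
  ρ (KK p) = PK p α s ∧ ρ (EE p) = PE p α s ∧ ρ (FF p) = PF p s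

/-- The matrix `H^α_s`: the block of the action on `P^α(s)` whose `(l, i)` entry is the
coefficient of `a_l` in the image of `b_i`. -/
def blockH (M : Matrix (PIdx p s) (PIdx p s) ℂ) : Matrix (Fin s) (Fin s) ℂ :=
  M.submatrix aIdx bIdx

theorem PF_aIdx_zero (h : 0 < s) (hs : s < p) :
    PF p s (aIdx ⟨0, h⟩) = Pi.single (xIdx ⟨p - s - 1, by lia⟩) 1 := by
  ext (j | j | j | j) <;> simp only [PF, Matrix.of_apply, Pi.single_apply] <;> grind

theorem PF_aIdx_succ {k : ℕ} (h : k + 1 < s) :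
    PF p s (aIdx ⟨k + 1, h⟩) = Pi.single (aIdx ⟨k, by lia⟩) 1 := by
  ext (j | j | j | j) <;> simp [PF, Pi.single_apply, Fin.ext_iff, eq_comm]

theorem PE_xIdx_last (h : 0 < s) (hs : s < p) :
    PE p α s (xIdx ⟨p - s - 1, by lia⟩) = Pi.single (bIdx ⟨0, h⟩) 1 := by
  ext (j | j | j | j) <;> simp only [PE, Matrix.of_apply, Pi.single_apply] <;> grind

theorem PE_aIdx_pred {k : ℕ} (h : k + 1 < s) :
    PE p α s (aIdx ⟨k, by lia⟩) = Pi.single (bIdx ⟨k + 1, h⟩) 1 +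
      Pi.single (aIdx ⟨k + 1, h⟩) (α * qi p (k + 1 : ℕ) * qi p (s - (k + 1 : ℕ))) := by
  ext (j | j | j | j) <;>
    simp only [PE, Matrix.of_apply, Pi.single_apply, Pi.add_apply] <;> grind

theorem PF_mul_PE_aIdx (hs : s < p) (i : Fin s) :
    (PF p s * PE p α s) (aIdx i) = Pi.single (bIdx i) 1 +
      Pi.single (aIdx i) (α * qi p (i : ℕ) * qi p (s - (i : ℕ))) := by
  obtain ⟨i, hi⟩ := i
  rw [Matrix.mul_apply_eq_vecMul]
  cases i with
  | zero =>
    rw [PF_aIdx_zero hi hs, Matrix.single_one_vecMul, Matrix.row, PE_xIdx_last hi hs]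
    simp [qi_zero]
  | succ k => rw [PF_aIdx_succ hi, Matrix.single_one_vecMul, Matrix.row, PE_aIdx_pred hi]

theorem ActsAsP.map_Casimir_aIdx (hρ : ActsAsP p α s ρ) (hα : α = 1 ∨ α = -1) (hs : s < p)
    (i : Fin s) :
    ρ (Casimir p) (aIdx i) = Pi.single (bIdx i) 1 + Pi.single (aIdx i) (α * cas p s) := by
  obtain ⟨hK, hE, hF⟩ := hρ
  rw [map_Casimir_of_diagonal hK, hE, hF]
  change (PF p s * PE p α s) (aIdx i) + (Matrix.diagonal _).row (aIdx i) = _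
  rw [PF_mul_PE_aIdx hs, Matrix.row_diagonal, add_assoc, ← Pi.single_add, PKdiag,
    qi_mul_qi_add_cartanEigenvalue hα]

theorem ActsAsP.toBlocks₁₁_map (hρ : ActsAsP p α s ρ) (hσ : ActsAsX p α s σ) (hp : p ≠ 0)
    (x : Uq p) : (ρ x).toBlocks₁₁ = σ x := by
  obtain ⟨hρK, hρE, hρF⟩ := hρ
  obtain ⟨hσK, hσE, hσF⟩ := hσ
  refine toBlocks₁₁_map_of_adjoin_eq_top (adjoin_EE_FF_KK_eq_top hp) ?_ x
  rintro g (rfl | rfl | rfl)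
  · rw [hρE, hσE]
    exact ⟨rfl, by ext i (j | j | j) <;> rfl⟩
  · rw [hρF, hσF]
    exact ⟨rfl, by ext i (j | j | j) <;> rfl⟩
  · rw [hρK, hσK]
    exact ⟨Matrix.toBlocks₁₁_diagonal _, Matrix.toBlocks₁₂_diagonal _⟩

theorem ActsAsP.blockH_Casimir_mul (hρ : ActsAsP p α s ρ) (hσ : ActsAsX p α s σ)
    (hα : α = 1 ∨ α = -1) (hs : s < p) (x : Uq p) :
    blockH (ρ (Casimir p * x)) = (α * cas p s) • blockH (ρ x) + σ x := by
  ext l i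
  change ρ (Casimir p * x) (aIdx l) (bIdx i) = α * cas p s * ρ x (aIdx l) (bIdx i) + σ x l i
  rw [map_mul, Matrix.mul_apply_eq_vecMul, hρ.map_Casimir_aIdx hα hs, Matrix.add_vecMul,
    Matrix.single_one_vecMul, Matrix.single_vecMul, ← hρ.toBlocks₁₁_map hσ (by lia) x, add_comm]
  rfl

theorem ActsAsP.trace_blockH_Casimir_mul (hρ : ActsAsP p α s ρ) (hσ : ActsAsX p α s σ)
    (hα : α = 1 ∨ α = -1) (hs : s < p) (x : Uq p) :
    (blockH (ρ (Casimir p * x))).trace =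
      α * cas p s * (blockH (ρ x)).trace + chiOf p σ x := by
  rw [hρ.blockH_Casimir_mul hσ hα hs, Matrix.trace_add, Matrix.trace_smul, smul_eq_mul]
  rfl

end Projective

section Forms

variable {p s : ℕ} {ρX : (α : ℂ) → (s : ℕ) → (Uq p →ₐ[ℂ] Matrix (Fin s) (Fin s) ℂ)}
  {ρP : (α : ℂ) → (s : ℕ) → (Uq p →ₐ[ℂ] Matrix (PIdx p s) (PIdx p s) ℂ)}

theorem GOf_apply (ρP : (α : ℂ) → (s : ℕ) → (Uq p →ₐ[ℂ] Matrix (PIdx p s) (PIdx p s) ℂ))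
    (s : ℕ) (x : Uq p) :
    GOf p ρP s x = (blockH (ρP 1 s x)).trace + (blockH (ρP (-1) (p - s) x)).trace := by
  simp only [GOf, LinearMap.add_apply, LinearMap.sum_apply]
  rfl

theorem GOf_one (ρP : (α : ℂ) → (s : ℕ) → (Uq p →ₐ[ℂ] Matrix (PIdx p s) (PIdx p s) ℂ))
    (s : ℕ) : GOf p ρP s 1 = 0 := by
  simp [GOf_apply, blockH, Matrix.trace]

theorem chiOf_one {n : Type} [Fintype n] [DecidableEq n] (σ : Uq p →ₐ[ℂ] Matrix n n ℂ) :
    chiOf p σ 1 = Fintype.card n := by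
  simp [chiOf]

theorem IsPRep.GOf_Casimir_mul (hP : IsPRep p ρP) (hX : IsXRep p ρX) (h1 : 1 ≤ s)
    (h2 : s ≤ p - 1) (x : Uq p) :
    GOf p ρP s (Casimir p * x) =
      cas p s * GOf p ρP s x + (chiOf p (ρX 1 s) + chiOf p (ρX (-1) (p - s))) x := by
  have hPlus : ActsAsP p 1 s (ρP 1 s) := hP 1 (.inl rfl) s h1 h2
  have hMinus : ActsAsP p (-1) (p - s) (ρP (-1) (p - s)) :=
    hP (-1) (.inr rfl) (p - s) (by lia) (by lia)
  have hcas : cas p (p - s) = -cas p s := cas_sub (by lia) (by lia)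
  rw [GOf_apply, GOf_apply, LinearMap.add_apply,
    hPlus.trace_blockH_Casimir_mul (hX 1 (.inl rfl) s h1 (by lia)) (.inl rfl) (by lia),
    hMinus.trace_blockH_Casimir_mul (hX (-1) (.inr rfl) (p - s) (by lia) (by lia)) (.inr rfl)
      (by lia), hcas]
  ring

theorem IsXRep.chiOf_add_chiOf_Casimir_mul (hX : IsXRep p ρX) (h1 : 1 ≤ s) (h2 : s ≤ p - 1)
    (x : Uq p) :
    (chiOf p (ρX 1 s) + chiOf p (ρX (-1) (p - s))) (Casimir p * x) =
      cas p s * (chiOf p (ρX 1 s) + chiOf p (ρX (-1) (p - s))) x := by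
  have hPlus : ActsAsX p 1 s (ρX 1 s) := hX 1 (.inl rfl) s h1 (by lia)
  have hMinus : ActsAsX p (-1) (p - s) (ρX (-1) (p - s)) :=
    hX (-1) (.inr rfl) (p - s) (by lia) (by lia)
  have hcas : cas p (p - s) = -cas p s := cas_sub (by lia) (by lia)
  rw [LinearMap.add_apply, LinearMap.add_apply, hPlus.chiOf_Casimir_mul (.inl rfl),
    hMinus.chiOf_Casimir_mul (.inr rfl), hcas]
  ring

theorem IsPRep.GOf_Casimir_pow_succ (hP : IsPRep p ρP) (hX : IsXRep p ρX) (h1 : 1 ≤ s)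
    (h2 : s ≤ p - 1) (n : ℕ) :
    GOf p ρP s (Casimir p ^ (n + 1)) = (n + 1) * p * cas p s ^ n := by
  have hcard : (chiOf p (ρX 1 s) + chiOf p (ρX (-1) (p - s))) 1 = p := by
    rw [LinearMap.add_apply, chiOf_one, chiOf_one, Fintype.card_fin, Fintype.card_fin,
      ← Nat.cast_add, Nat.add_sub_cancel' (by lia)]
  rw [apply_pow_mul_of_jordan (hX.chiOf_add_chiOf_Casimir_mul h1 h2)
    (hP.GOf_Casimir_mul hX h1 h2), GOf_one, hcard]
  ring

end Forms

/-- `χ^α_s(Cx) = α c_s χ^α_s(x)`,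
`G_s(Cx) = c_s G_s(x) + (χ^+_s + χ^-_{p-s})(x)`, and `G_s(C^n) = n p c_s^{n-1}`. -/
theorem statement_18 (p : ℕ) (hp : 2 ≤ p)
    (ρX : (α : ℂ) → (s : ℕ) → (Uq p →ₐ[ℂ] Matrix (Fin s) (Fin s) ℂ))
    (hX : IsXRep p ρX)
    (ρP : (α : ℂ) → (s : ℕ) → (Uq p →ₐ[ℂ] Matrix (PIdx p s) (PIdx p s) ℂ))
    (hP : IsPRep p ρP) :
    (∀ (α : ℂ), (α = 1 ∨ α = -1) → ∀ s : ℕ, 1 ≤ s → s ≤ p - 1 → ∀ x : Uq p,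
      chiOf p (ρX α s) (Casimir p * x) = α * cas p s * chiOf p (ρX α s) x)
    ∧ (∀ s : ℕ, 1 ≤ s → s ≤ p - 1 → ∀ x : Uq p,
        GOf p ρP s (Casimir p * x) =
          cas p s * GOf p ρP s x + (chiOf p (ρX 1 s) + chiOf p (ρX (-1) (p - s))) x)
    ∧ (∀ s : ℕ, 1 ≤ s → s ≤ p - 1 → ∀ n : ℕ, 1 ≤ n →
        GOf p ρP s (Casimir p ^ n) = (n : ℂ) * (p : ℂ) * cas p s ^ (n - 1)) := by
  refine ⟨fun α hα s h1 h2 x => ?_, fun s h1 h2 => hP.GOf_Casimir_mul hX h1 h2,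
    fun s h1 h2 n hn => ?_⟩
  · have hσ : ActsAsX p α s (ρX α s) := hX α hα s h1 (by lia)
    exact hσ.chiOf_Casimir_mul hα x
  · obtain ⟨m, rfl⟩ := Nat.exists_eq_add_of_le' hn
    rw [hP.GOf_Casimir_pow_succ hX h1 h2, Nat.add_sub_cancel, Nat.cast_succ]

end Uqsl2
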